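/- The limit distribution function F of the Calkin–Wilf tree is singular: for Lebesgue-almost every x > 0, F is differentiable at x with F′(x) = 0. -/

import Mathlib

open Filter

/-- The generations of the Calkin–Wilf tree: `CW 0 = [1/1]` is the first
generation, and each generation is obtained from the previous one by replacing
each entry `x` by `x/(x+1)` and `x+1`, in this order.  Thus the `n`-th
generation of the paper is `CW (n-1)`. -/
def CW : ℕ → List ℚ
  | 0 => [1]
  | n + 1 => (CW n).flatMap (fun x => [x / (x + 1), x + 1])

open scoped Classical in
/-- `Fcw n` is the distribution function of the `(n+1)`-st generation of the
Calkin–Wilf tree: `Fcw (n-1) x = F_n(x) = 2^(1-n) · #{j : x_j^(n) ≤ x}`. -/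
noncomputable def Fcw (n : ℕ) (x : ℝ) : ℝ :=
  ((CW n).countP (fun q => decide ((q : ℝ) ≤ x))) / 2 ^ n

/-!
`F` satisfies `F (x / (x + 1)) = F x / 2` and `F (x + 1) = (1 + F x) / 2` on `[0, ∞)`. Hence on
every Stern–Brocot interval `[a/b, c/d]` it is an affine image of `F` on `[0, ∞]`, transported by
`y ↦ (c y + a) / (d y + b)`, and it increases by the same amount on the two subintervals cut off by
the mediant `(a + c) / (b + d)`.

Being monotone, `F` is differentiable almost everywhere. If `F'(x) = l`, the slopes of `F` over the
nested Stern–Brocot intervals around `x` tend to `l`. One subdivision multiplies the slope by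
`(b + d) / (2 d)` or `(b + d) / (2 b)`, so `l ≠ 0` would force `b / d → 1`. But the denominators of
the next interval are `b, b + d` or `b + d, d`, whose ratio is then close to `1 / 2` or `2`.
-/

open Asymptotics Set
open scoped Topology

theorem tendsto_slope_of_hasDerivAt_of_isBigO {𝕜 E ι : Type*} [NontriviallyNormedField 𝕜]
    [NormedAddCommGroup E] [NormedSpace 𝕜 E] {f : 𝕜 → E} {f' : E} {x : 𝕜} {p : Filter ι}
    {u v : ι → 𝕜} (hf : HasDerivAt f f' x) (hu : Tendsto u p (𝓝 x)) (hv : Tendsto v p (𝓝 x))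
    (huv : ∀ᶠ i in p, u i ≠ v i) (hO : (fun i => u i - x) =O[p] fun i => v i - u i) :
    Tendsto (fun i => slope f (u i) (v i)) p (𝓝 f') := by
  have hO' : (fun i => v i - x) =O[p] fun i => v i - u i := by
    simpa using (isBigO_refl (fun i => v i - u i) p).add hO
  have hfu := (hf.isLittleO.comp_tendsto hu).trans_isBigO hO
  have hfv := (hf.isLittleO.comp_tendsto hv).trans_isBigO hO'
  have hdiff : (fun i => f (v i) - f (u i) - (v i - u i) • f') =o[p] fun i => v i - u i :=
    (hfv.sub hfu).congr_left fun i => by simp only [Function.comp_apply]; module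
  have hlim : Tendsto (fun i => (v i - u i)⁻¹ • (f (v i) - f (u i) - (v i - u i) • f')) p (𝓝 0) :=
    hdiff.tendsto_inv_smul_nhds_zero
  refine tendsto_sub_nhds_zero_iff.1 (hlim.congr' ?_)
  filter_upwards [huv] with i hi
  rw [smul_sub, inv_smul_smul₀ (sub_ne_zero.2 hi.symm), slope_def_module]

theorem tendsto_slope_of_hasDerivAt_of_straddle {E ι : Type*} [NormedAddCommGroup E]
    [NormedSpace ℝ E] {f : ℝ → E} {f' : E} {x : ℝ} {p : Filter ι} {u v : ι → ℝ}
    (hf : HasDerivAt f f' x) (hu : ∀ i, u i ≤ x) (hv : ∀ i, x ≤ v i) (huv : ∀ i, u i < v i)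
    (hlim : Tendsto (fun i => v i - u i) p (𝓝 0)) :
    Tendsto (fun i => slope f (u i) (v i)) p (𝓝 f') := by
  have hux : Tendsto (fun i => u i - x) p (𝓝 0) :=
    squeeze_zero_norm (fun i => by
      rw [Real.norm_eq_abs, abs_of_nonpos (sub_nonpos.2 (hu i))]
      linarith [hv i]) hlim
  have hu' : Tendsto u p (𝓝 x) := tendsto_sub_nhds_zero_iff.1 hux
  have hv' : Tendsto v p (𝓝 x) := by simpa using hlim.add hu'
  refine tendsto_slope_of_hasDerivAt_of_isBigO hf hu' hv' (.of_forall fun i => (huv i).ne) ?_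
  refine .of_bound 1 (.of_forall fun i => ?_)
  rw [one_mul, Real.norm_eq_abs, Real.norm_eq_abs, abs_of_nonpos (sub_nonpos.2 (hu i)),
    abs_of_pos (sub_pos.2 (huv i))]
  linarith [hv i]

theorem eventually_abs_succ_sub_lt {s : ℕ → ℝ} {l ε : ℝ} (hs : Tendsto s atTop (𝓝 l))
    (hl : l ≠ 0) (hε : 0 < ε) : ∀ᶠ n in atTop, |s (n + 1) - s n| < ε * |s n| := by
  have hdiff : Tendsto (fun n => |s (n + 1) - s n|) atTop (𝓝 0) := by
    simpa using ((hs.comp (tendsto_add_atTop_nat 1)).sub hs).abs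
  exact hdiff.eventually_lt (hs.abs.const_mul ε) (by positivity)

/-- The nonnegative Stern–Brocot intervals `[a/b, c/d]` with finite endpoints: consecutive
fractions, that is, with `b c - a d = 1`. They are the cells that shrink to a given point. -/
structure SternBrocotInterval where
  a : ℕ
  b : ℕ
  c : ℕ
  d : ℕ
  b_pos : 0 < b
  d_pos : 0 < d
  det : b * c = a * d + 1

namespace SternBrocotInterval

/-- The left endpoint `a/b`. -/
noncomputable def lower (I : SternBrocotInterval) : ℝ := I.a / I.b

/-- The right endpoint `c/d`. -/
noncomputable def upper (I : SternBrocotInterval) : ℝ := I.c / I.d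

/-- The mediant `(a + c) / (b + d)` of the endpoints, where the interval is subdivided. -/
noncomputable def mediant (I : SternBrocotInterval) : ℝ := (I.a + I.c) / (I.b + I.d)

/-- The Möbius parametrization of `[a/b, c/d)` by `y ∈ [0, ∞)`; it sends `0`, `1`, `∞` to the left
endpoint, the mediant and the right endpoint. -/
noncomputable def param (I : SternBrocotInterval) (y : ℝ) : ℝ := (I.c * y + I.a) / (I.d * y + I.b)

/-- The subinterval to the left of the mediant. -/
def leftHalf (I : SternBrocotInterval) : SternBrocotInterval where
  a := I.a
  b := I.b
  c := I.a + I.c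
  d := I.b + I.d
  b_pos := I.b_pos
  d_pos := Nat.add_pos_left I.b_pos _
  det := by linear_combination I.det

/-- The subinterval to the right of the mediant. -/
def rightHalf (I : SternBrocotInterval) : SternBrocotInterval where
  a := I.a + I.c
  b := I.b + I.d
  c := I.c
  d := I.d
  b_pos := Nat.add_pos_left I.b_pos _
  d_pos := I.d_pos
  det := by linear_combination I.det

open scoped Classical in
/-- One step of the Stern–Brocot subdivision towards `x`; the mediant itself goes to the left. -/
noncomputable def descend (x : ℝ) (I : SternBrocotInterval) : SternBrocotInterval :=
  if x ≤ I.mediant then I.leftHalf else I.rightHalf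

/-- The interval `[k, k + 1]`. -/
def unitAt (k : ℕ) : SternBrocotInterval where
  a := k
  b := 1
  c := k + 1
  d := 1
  b_pos := one_pos
  d_pos := one_pos
  det := by ring

/-- The nested intervals around `x ≥ 0` obtained by repeated subdivision of `[⌊x⌋, ⌊x⌋ + 1]`. -/
noncomputable def around (x : ℝ) : ℕ → SternBrocotInterval
  | 0 => unitAt ⌊x⌋₊
  | n + 1 => (around x n).descend x

/-- The denominators of the endpoints are comparable. Any constant below the golden ratio in
place of `4/3` would exclude that an interval and one of its halves are both balanced. -/
def IsBalanced (I : SternBrocotInterval) : Prop := 3 * I.b ≤ 4 * I.d ∧ 3 * I.d ≤ 4 * I.b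

variable (I : SternBrocotInterval)

theorem cast_b_pos : (0 : ℝ) < I.b := Nat.cast_pos.2 I.b_pos

theorem cast_d_pos : (0 : ℝ) < I.d := Nat.cast_pos.2 I.d_pos

theorem descend_eq_or (x : ℝ) : I.descend x = I.leftHalf ∨ I.descend x = I.rightHalf :=
  ite_eq_or_eq _ _ _

theorem upper_sub_lower : I.upper - I.lower = 1 / (I.b * I.d) := by
  have hb := I.cast_b_pos
  have hd := I.cast_d_pos
  have hdet : (I.b * I.c : ℝ) = I.a * I.d + 1 := by exact_mod_cast I.det
  unfold upper lower
  field_simp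
  linarith

theorem lower_lt_upper : I.lower < I.upper := by
  have hb := I.cast_b_pos
  have hd := I.cast_d_pos
  rw [← sub_pos, upper_sub_lower]
  positivity

variable {I} in
theorem mem_descend {x : ℝ} (hx : x ∈ Icc I.lower I.upper) :
    x ∈ Icc (I.descend x).lower (I.descend x).upper := by
  unfold descend
  split_ifs with h
  · exact ⟨hx.1, by simpa [upper, leftHalf, mediant] using h⟩
  · exact ⟨by simpa [lower, rightHalf, mediant] using (not_le.1 h).le, hx.2⟩

theorem mem_around {x : ℝ} (hx : 0 ≤ x) (n : ℕ) :
    x ∈ Icc (around x n).lower (around x n).upper := by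
  induction n with
  | zero => simpa [around, unitAt, lower, upper] using
      And.intro (Nat.floor_le hx) (Nat.lt_floor_add_one x).le
  | succ n ih => exact mem_descend ih

theorem succ_le_around_b_mul_d (x : ℝ) (n : ℕ) : n + 1 ≤ (around x n).b * (around x n).d := by
  induction n with
  | zero => simp [around, unitAt]
  | succ n ih =>
    have hb := (around x n).b_pos
    have hd := (around x n).d_pos
    rcases (around x n).descend_eq_or x with h | h <;>
      simp only [around, h, leftHalf, rightHalf] <;> nlinarith

theorem tendsto_around_length (x : ℝ) :
    Tendsto (fun n => (around x n).upper - (around x n).lower) atTop (𝓝 0) := by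
  refine squeeze_zero (fun n => (sub_pos.2 (around x n).lower_lt_upper).le) (fun n => ?_)
    (tendsto_one_div_add_atTop_nhds_zero_nat (𝕜 := ℝ))
  rw [upper_sub_lower]
  gcongr
  exact_mod_cast succ_le_around_b_mul_d x n

theorem tendsto_slope_around {F : ℝ → ℝ} {x l : ℝ} (hx : 0 ≤ x) (h : HasDerivAt F l x) :
    Tendsto (fun n => slope F (around x n).lower (around x n).upper) atTop (𝓝 l) :=
  tendsto_slope_of_hasDerivAt_of_straddle h (fun n => (mem_around hx n).1)
    (fun n => (mem_around hx n).2) (fun n => (around x n).lower_lt_upper) (tendsto_around_length x)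

variable {I} in
theorem IsBalanced.not_descend (hI : I.IsBalanced) (x : ℝ) : ¬(I.descend x).IsBalanced := by
  have hb := I.b_pos
  unfold IsBalanced at *
  rcases I.descend_eq_or x with h | h <;> simp only [h, leftHalf, rightHalf] <;> omega

/-- Since `b' d'` is `b d + b²` or `b d + d²`, the hypothesis bounds `|b - d|`. -/
theorem isBalanced_of_abs_sub_le (x : ℝ)
    (h : |((I.descend x).b * (I.descend x).d - 2 * (I.b * I.d) : ℝ)| ≤ 1 / 4 * (I.b * I.d)) :
    I.IsBalanced := by
  have hb := I.cast_b_pos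
  have hd := I.cast_d_pos
  suffices (3 : ℝ) * I.b ≤ 4 * I.d ∧ (3 : ℝ) * I.d ≤ 4 * I.b by exact_mod_cast this
  rw [abs_le] at h
  rcases I.descend_eq_or x with hx | hx <;>
    simp only [hx, leftHalf, rightHalf] at h <;> push_cast at h
  · have hbd : (I.b : ℝ) ≤ 5 / 4 * I.d := le_of_mul_le_mul_left (by linarith) hb
    have hdb : 3 / 4 * (I.d : ℝ) ≤ I.b := le_of_mul_le_mul_left (by linarith) hb
    constructor <;> linarith
  · have hdb : (I.d : ℝ) ≤ 5 / 4 * I.b := le_of_mul_le_mul_left (by linarith) hd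
    have hbd : 3 / 4 * (I.b : ℝ) ≤ I.d := le_of_mul_le_mul_left (by linarith) hd
    constructor <;> linarith

theorem param_zero : I.param 0 = I.lower := by simp [param, lower]

theorem param_one : I.param 1 = I.mediant := by simp [param, mediant, add_comm]

theorem param_leftHalf {y : ℝ} (hy : 0 ≤ y) : I.leftHalf.param y = I.param (y / (y + 1)) := by
  have hb := I.cast_b_pos
  simp only [param, leftHalf]
  push_cast
  field_simp
  ring

theorem param_rightHalf (y : ℝ) : I.rightHalf.param y = I.param (y + 1) := by
  simp only [param, rightHalf]
  push_cast
  ring_nf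

theorem param_unitAt {y : ℝ} (hy : 0 ≤ y) (k : ℕ) : (unitAt k).param y = y / (y + 1) + k := by
  simp only [param, unitAt]
  push_cast
  field_simp
  ring

end SternBrocotInterval

/-- The functional equations on `[0, ∞)` satisfied by the limit distribution function of the
Calkin–Wilf tree; `x / (x + 1)` and `x + 1` are the two children of `x`. -/
structure CalkinWilfEquations (F : ℝ → ℝ) : Prop where
  map_div_add_one : ∀ x, 0 ≤ x → F (x / (x + 1)) = F x / 2
  map_add_one : ∀ x, 0 ≤ x → F (x + 1) = (1 + F x) / 2

/-- `F` on `I` is the copy of `F` on `[0, ∞]` under `SternBrocotInterval.param`, scaled by `δ` and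
translated, with `F ∞ = 1`; thus `δ` is the increment of `F` over `I`. -/
structure SelfSimilarOn (F : ℝ → ℝ) (I : SternBrocotInterval) (δ : ℝ) : Prop where
  map_param : ∀ y, 0 ≤ y → F (I.param y) = F I.lower + δ * F y
  map_upper : F I.upper = F I.lower + δ

namespace SelfSimilarOn

open SternBrocotInterval

variable {F : ℝ → ℝ} {I : SternBrocotInterval} {δ : ℝ}

theorem slope_eq (h : SelfSimilarOn F I δ) : slope F I.lower I.upper = δ * (I.b * I.d) := by
  rw [slope_def_field, h.map_upper, upper_sub_lower, add_sub_cancel_left, div_div_eq_mul_div,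
    div_one]

theorem isBalanced_of_slope {x : ℝ} (h : SelfSimilarOn F I δ)
    (h' : SelfSimilarOn F (I.descend x) (δ / 2)) (hδ : δ ≠ 0)
    (hslope : |slope F (I.descend x).lower (I.descend x).upper - slope F I.lower I.upper| ≤
      1 / 8 * |slope F I.lower I.upper|) : I.IsBalanced := by
  refine I.isBalanced_of_abs_sub_le x ?_
  rw [h.slope_eq, h'.slope_eq] at hslope
  set p : ℝ := I.b * I.d
  set q : ℝ := (I.descend x).b * (I.descend x).d
  have hp0 : 0 ≤ p := by positivity
  have hfactor : δ / 2 * q - δ * p = δ / 2 * (q - 2 * p) := by ring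
  rw [hfactor, abs_mul, abs_mul, abs_div, abs_two, abs_of_nonneg hp0] at hslope
  exact le_of_mul_le_mul_left (by linarith) (half_pos (abs_pos.2 hδ))

end SelfSimilarOn

namespace CalkinWilfEquations

open SternBrocotInterval

variable {F : ℝ → ℝ} {I : SternBrocotInterval} {δ : ℝ}

theorem map_zero (hF : CalkinWilfEquations F) : F 0 = 0 := by
  have h := hF.map_div_add_one 0 le_rfl
  rw [zero_div] at h
  linarith

theorem map_one (hF : CalkinWilfEquations F) : F 1 = 1 / 2 := by
  simpa [hF.map_zero] using hF.map_add_one 0 le_rfl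

theorem map_add_natCast (hF : CalkinWilfEquations F) {y : ℝ} (hy : 0 ≤ y) (k : ℕ) :
    F (y + k) = 1 - (1 / 2) ^ k + (1 / 2) ^ k * F y := by
  induction k with
  | zero => simp
  | succ k ih =>
    rw [Nat.cast_succ, ← add_assoc, hF.map_add_one _ (by positivity), ih]
    ring

theorem selfSimilarOn_unitAt (hF : CalkinWilfEquations F) (k : ℕ) :
    SelfSimilarOn F (unitAt k) ((1 / 2) ^ (k + 1)) := by
  have hlower : F (unitAt k).lower = 1 - (1 / 2) ^ k := by
    simpa [lower, unitAt, hF.map_zero] using hF.map_add_natCast le_rfl k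
  refine ⟨fun y hy => ?_, ?_⟩
  · rw [param_unitAt hy, hF.map_add_natCast (by positivity), hF.map_div_add_one y hy, hlower]
    ring
  · have hupper : (unitAt k).upper = 1 + k := by simp [upper, unitAt, add_comm]
    rw [hupper, hF.map_add_natCast zero_le_one, hF.map_one, hlower]
    ring

theorem selfSimilarOn_leftHalf (hF : CalkinWilfEquations F) (h : SelfSimilarOn F I δ) :
    SelfSimilarOn F I.leftHalf (δ / 2) := by
  have hlower : I.leftHalf.lower = I.lower := rfl
  have hupper : I.leftHalf.upper = I.param 1 := by
    rw [param_one]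
    simp [upper, leftHalf, mediant]
  refine ⟨fun y hy => ?_, ?_⟩
  · rw [I.param_leftHalf hy, h.map_param _ (by positivity), hF.map_div_add_one y hy, hlower]
    ring
  · rw [hupper, h.map_param 1 zero_le_one, hF.map_one, hlower]
    ring

theorem selfSimilarOn_rightHalf (hF : CalkinWilfEquations F) (h : SelfSimilarOn F I δ) :
    SelfSimilarOn F I.rightHalf (δ / 2) := by
  have hlower : F I.rightHalf.lower = F I.lower + δ / 2 := by
    rw [← param_zero, param_rightHalf, zero_add, h.map_param 1 zero_le_one, hF.map_one]
    ring
  have hupper : I.rightHalf.upper = I.upper := rfl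
  refine ⟨fun y hy => ?_, ?_⟩
  · rw [param_rightHalf, h.map_param _ (by positivity), hF.map_add_one y hy, hlower]
    ring
  · rw [hupper, h.map_upper, hlower]
    ring

theorem selfSimilarOn_descend (hF : CalkinWilfEquations F) (h : SelfSimilarOn F I δ) (x : ℝ) :
    SelfSimilarOn F (I.descend x) (δ / 2) := by
  rcases I.descend_eq_or x with hx | hx <;> rw [hx]
  · exact hF.selfSimilarOn_leftHalf h
  · exact hF.selfSimilarOn_rightHalf h

theorem exists_selfSimilarOn_around (hF : CalkinWilfEquations F) (x : ℝ) (n : ℕ) :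
    ∃ δ ≠ 0, SelfSimilarOn F (around x n) δ := by
  induction n with
  | zero => exact ⟨_, by positivity, hF.selfSimilarOn_unitAt _⟩
  | succ n ih =>
    obtain ⟨δ, hδ, h⟩ := ih
    exact ⟨δ / 2, by positivity, hF.selfSimilarOn_descend h x⟩

theorem eq_zero_of_hasDerivAt (hF : CalkinWilfEquations F) {x l : ℝ} (hx : 0 ≤ x)
    (h : HasDerivAt F l x) : l = 0 := by
  by_contra hl
  have hbalanced : ∀ᶠ n in atTop, (around x n).IsBalanced := by
    filter_upwards [eventually_abs_succ_sub_lt (tendsto_slope_around hx h) hl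
      (by norm_num : (0 : ℝ) < 1 / 8)] with n hn
    obtain ⟨δ, hδ, hsim⟩ := hF.exists_selfSimilarOn_around x n
    exact hsim.isBalanced_of_slope (hF.selfSimilarOn_descend hsim x) hδ hn.le
  obtain ⟨n, hn, hn'⟩ :=
    (hbalanced.and ((tendsto_add_atTop_nat 1).eventually hbalanced)).exists
  exact hn.not_descend x hn'

end CalkinWilfEquations

section CalkinWilf

theorem pos_of_mem_CW {n : ℕ} {q : ℚ} (hq : q ∈ CW n) : 0 < q := by
  induction n generalizing q with
  | zero => simp_all [CW]
  | succ n ih =>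
    simp only [CW, List.mem_flatMap, List.mem_cons, List.not_mem_nil, or_false] at hq
    obtain ⟨y, hy, rfl | rfl⟩ := hq <;> have := ih hy <;> positivity

theorem length_CW (n : ℕ) : (CW n).length = 2 ^ n := by
  induction n with
  | zero => rfl
  | succ n ih => simp [CW, List.length_flatMap, ih, pow_succ]

theorem countP_CW_succ (p : ℚ → Bool) (n : ℕ) :
    (CW (n + 1)).countP p =
      (CW n).countP (fun q => p (q / (q + 1))) + (CW n).countP (fun q => p (q + 1)) := by
  rw [CW]
  induction CW n with
  | nil => rfl
  | cons q l ih =>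
    simp only [List.flatMap_cons, List.countP_append, List.countP_cons, List.countP_nil, ih]
    ring

/-- In `Fcw` the coercion to `ℝ` is elaborated on the whole list `CW n`, not on its entries. -/
theorem Fcw_eq_countP_div (n : ℕ) (x : ℝ) :
    Fcw n x = (CW n).countP (fun q : ℚ => decide ((q : ℝ) ≤ x)) / 2 ^ n := by
  simp [Fcw, ← List.map_eq_flatMap, List.countP_map, Function.comp_def]

theorem Fcw_monotone (n : ℕ) : Monotone (Fcw n) := by
  intro x y hxy
  rw [Fcw_eq_countP_div, Fcw_eq_countP_div]
  gcongr ?_ / _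
  refine Nat.cast_le.2 (List.countP_mono_left fun q _ hq => ?_)
  simp only [decide_eq_true_eq] at hq ⊢
  exact hq.trans hxy

theorem Fcw_succ_div_add_one (n : ℕ) {x : ℝ} (hx : 0 ≤ x) :
    Fcw (n + 1) (x / (x + 1)) = Fcw n x / 2 := by
  have hleft : (CW n).countP (fun q : ℚ => decide (((q / (q + 1) : ℚ) : ℝ) ≤ x / (x + 1))) =
      (CW n).countP (fun q : ℚ => decide ((q : ℝ) ≤ x)) := by
    refine List.countP_congr fun q hq => ?_
    have hq : (0 : ℝ) < q := by exact_mod_cast pos_of_mem_CW hq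
    simp only [decide_eq_true_eq]
    push_cast
    rw [div_le_div_iff₀ (by positivity) (by positivity)]
    constructor <;> intro h <;> linarith
  have hright :
      (CW n).countP (fun q : ℚ => decide (((q + 1 : ℚ) : ℝ) ≤ x / (x + 1))) = 0 := by
    refine List.countP_eq_zero.2 fun q hq => ?_
    have hq : (0 : ℝ) < q := by exact_mod_cast pos_of_mem_CW hq
    have hlt : x / (x + 1) < 1 := (div_lt_one (by positivity)).2 (lt_add_one x)
    simp only [decide_eq_true_eq]
    push_cast
    linarith
  rw [Fcw_eq_countP_div, Fcw_eq_countP_div, countP_CW_succ, hleft, hright, add_zero, pow_succ,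
    div_div]

theorem Fcw_succ_add_one (n : ℕ) {x : ℝ} (hx : 0 ≤ x) :
    Fcw (n + 1) (x + 1) = (1 + Fcw n x) / 2 := by
  have hleft : (CW n).countP (fun q : ℚ => decide (((q / (q + 1) : ℚ) : ℝ) ≤ x + 1)) = 2 ^ n := by
    rw [← length_CW n]
    refine List.countP_eq_length.2 fun q hq => ?_
    have hq : (0 : ℝ) < q := by exact_mod_cast pos_of_mem_CW hq
    have hlt : (q : ℝ) / (q + 1) < 1 := (div_lt_one (by positivity)).2 (lt_add_one _)
    simp only [decide_eq_true_eq]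
    push_cast
    linarith
  have hright : (CW n).countP (fun q : ℚ => decide (((q + 1 : ℚ) : ℝ) ≤ x + 1)) =
      (CW n).countP (fun q : ℚ => decide ((q : ℝ) ≤ x)) := by
    simp
  rw [Fcw_eq_countP_div, Fcw_eq_countP_div, countP_CW_succ, hleft, hright, pow_succ]
  push_cast
  field_simp

variable {F : ℝ → ℝ}

theorem calkinWilfEquations_of_tendsto_Fcw
    (hF : ∀ x : ℝ, 0 ≤ x → Tendsto (fun n => Fcw n x) atTop (𝓝 (F x))) :
    CalkinWilfEquations F where
  map_div_add_one x hx := by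
    have hsucc := (hF (x / (x + 1)) (by positivity)).comp (tendsto_add_atTop_nat 1)
    refine tendsto_nhds_unique hsucc (((hF x hx).div_const 2).congr fun n => ?_)
    exact (Fcw_succ_div_add_one n hx).symm
  map_add_one x hx := by
    have hsucc := (hF (x + 1) (by positivity)).comp (tendsto_add_atTop_nat 1)
    refine tendsto_nhds_unique hsucc ((((hF x hx).const_add 1).div_const 2).congr fun n => ?_)
    exact (Fcw_succ_add_one n hx).symm

theorem monotoneOn_of_tendsto_Fcw
    (hF : ∀ x : ℝ, 0 ≤ x → Tendsto (fun n => Fcw n x) atTop (𝓝 (F x))) :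
    MonotoneOn F (Ici 0) := fun x hx y hy hxy =>
  le_of_tendsto_of_tendsto' (hF x hx) (hF y hy) fun n => Fcw_monotone n hxy

end CalkinWilf

/-- The limit distribution function `F` of the Calkin–Wilf tree (the pointwise
limit of the generation distribution functions `F_n`) is singular: for
Lebesgue-almost every `x > 0`, `F` is differentiable at `x` with `F'(x) = 0`. -/
theorem calkin_wilf_limit_distribution_singular (F : ℝ → ℝ)
    (hF : ∀ x : ℝ, 0 ≤ x → Tendsto (fun n => Fcw n x) atTop (nhds (F x))) :
    ∀ᵐ x : ℝ, 0 < x → HasDerivAt F 0 x := by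
  have hmono := monotoneOn_of_tendsto_Fcw hF
  have heq := calkinWilfEquations_of_tendsto_Fcw hF
  filter_upwards [hmono.ae_differentiableWithinAt_of_mem] with x hx hpos
  have hderiv : HasDerivAt F (deriv F x) x :=
    ((hx hpos.le).differentiableAt (Ici_mem_nhds hpos)).hasDerivAt
  rwa [heq.eq_zero_of_hasDerivAt hpos.le hderiv] at hderiv
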